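/- For n = 32 and every q ≤ 1966: the word w contains no factor v having a kernel period q such that 31(|v|+1) ≥ 32q − 3. (Remark R1.) -/

import Mathlib

/-- The four-letter alphabet `A₄ = {1,2,3,4}`; the value `k : Fin 4` represents letter `k+1`. -/
abbrev A4 := Fin 4

/-- The morphism `f` on letters: `f(1)=121, f(2)=123, f(3)=141, f(4)=142`
(letters `1,2,3,4` encoded as `0,1,2,3`). -/
def fm : A4 → List A4
  | 0 => [0, 1, 0]
  | 1 => [0, 1, 2]
  | 2 => [0, 3, 0]
  | 3 => [0, 3, 1]

/-- The morphism `f` extended to words by concatenation. -/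
def fw (u : List A4) : List A4 := u.flatMap fm

/-- The fixed point `w` of `f` starting with the letter `1`: since `|f^k(1)| = 3^k` and each
`f^k(1)` is a prefix of `f^(k+1)(1)`, the `n`-th letter of `w` is the `n`-th letter of
`f^(n+1)(1)`. -/
def w (n : ℕ) : A4 := ((fw^[n + 1]) [0]).getD n 0

/-- The finite word `t` occurs at position `i` in the infinite word `x`. -/
def OccursAt {α : Type*} (t : List α) (x : ℕ → α) (i : ℕ) : Prop :=
  t = (List.range t.length).map fun k => x (i + k)

/-- The finite word `v` is a factor of the infinite word `x`. -/
def FactorOf {α : Type*} (v : List α) (x : ℕ → α) : Prop :=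
  ∃ i, OccursAt v x i

/-- The finite word `v` has period `q ≥ 1`: `v(j) = v(j+q)` whenever `0 ≤ j < |v| - q`. -/
def HasPeriod {α : Type*} (v : List α) (q : ℕ) : Prop :=
  1 ≤ q ∧ ∀ j, j + q < v.length → v[j]? = v[j + q]?

/-- A word lies in `ker ψ` if each letter of `A₄` occurs in it a number of times
divisible by `4`. -/
def InKerPsi (u : List A4) : Prop := ∀ a : A4, 4 ∣ u.count a

/-- `q` is a kernel period of `v`: `1 ≤ q ≤ |v|`, `v` has period `q`, and the prefix of `v`
of length `q` lies in `ker ψ`. -/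
def KernelPeriod (v : List A4) (q : ℕ) : Prop :=
  q ≤ v.length ∧ HasPeriod v q ∧ InKerPsi (v.take q)

/-!
A factor of `w` of length `q + l` with kernel period `q` is a run of `l + 1` consecutive windows of
length `q` that all lie in `ker ψ`, and the claim is that `l` is small compared to `q`. Words in
`ker ψ` have length divisible by `4`. If `l ≥ 3`, comparing letters of `w` modulo the block length
`3` gives `3 ∣ q`; as the incidence matrix of `f` is invertible modulo `4`, such a run comes from
one of period `q / 3`, with `l` replaced by `(l - 1) / 3`. The bound `31 * (2 * l + 3) ≤ 2 * q`
survives the passage back from `q / 3` to `q`, so it holds for all periods once it is known for the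
small ones. It fails for four small periods, which still satisfy the weaker bound that is claimed;
checking their triples keeps these failures from propagating.
-/

/-! ### Windows of infinite words -/

section Window

variable {α : Type*} (x : ℕ → α)

/-- The factor of length `n` of the infinite word `x` that starts at position `i`. -/
def window (i n : ℕ) : List α := (List.range n).map fun k => x (i + k)

@[simp]
lemma length_window (i n : ℕ) : (window x i n).length = n := by
  simp [window]

lemma window_one (i : ℕ) : window x i 1 = [x i] := rfl

lemma window_add (i m n : ℕ) : window x i (m + n) = window x i m ++ window x (i + m) n := by
  simp [window, List.range_add, Nat.add_assoc]

lemma cons_window (i n : ℕ) : x i :: window x (i + 1) n = window x i n ++ [x (i + n)] := by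
  rw [← window_one, ← window_add, ← List.singleton_append, ← window_one, ← window_add,
    Nat.add_comm]

lemma take_window {m n : ℕ} (i : ℕ) (h : m ≤ n) :
    (window x i n).take m = window x i m := by
  obtain ⟨s, rfl⟩ := Nat.exists_eq_add_of_le h
  rw [window_add, List.take_left' (length_window x i m)]

lemma drop_window (i m n : ℕ) : (window x i (m + n)).drop m = window x (i + m) n := by
  rw [window_add, List.drop_left' (length_window x i m)]

lemma take_drop_window {i r m n : ℕ} (h : r + m ≤ n) :
    ((window x i n).drop r).take m = window x (i + r) m := by
  obtain ⟨s, rfl⟩ := Nat.exists_eq_add_of_le h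
  rw [Nat.add_assoc, drop_window, take_window _ _ (Nat.le_add_right m s)]

lemma window_infix {i r m n : ℕ} (h : r + m ≤ n) : window x (i + r) m <:+: window x i n := by
  rw [← take_drop_window x h]
  exact (List.take_prefix _ _).isInfix.trans (List.drop_suffix _ _).isInfix

end Window

/-! ### The fixed point of `f` -/

lemma fw_append (u v : List A4) : fw (u ++ v) = fw u ++ fw v :=
  List.flatMap_append

lemma length_fw (u : List A4) : (fw u).length = 3 * u.length := by
  have hfm : ∀ a, (fm a).length = 3 := by decide
  simp [fw, List.length_flatMap, hfm, Nat.mul_comm]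

lemma length_iterate_fw (k : ℕ) (u : List A4) : (fw^[k] u).length = 3 ^ k * u.length := by
  induction k with
  | zero => simp
  | succ k ih => rw [Function.iterate_succ_apply', length_fw, ih]; ring

lemma iterate_fw_prefix {k m : ℕ} (h : k ≤ m) : fw^[k] [0] <+: fw^[m] [0] := by
  have hstep (n : ℕ) : fw^[n] [0] <+: fw^[n + 1] [0] := by
    induction n with
    | zero => exact ⟨[1, 0], rfl⟩
    | succ n ih =>
      rw [Function.iterate_succ_apply', Function.iterate_succ_apply' fw (n + 1)]
      exact ih.flatMap fm
  induction m, h using Nat.le_induction with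
  | base => exact List.prefix_rfl
  | succ m _ ih => exact ih.trans (hstep m)

lemma iterate_fw_eq_window (k : ℕ) : fw^[k] [0] = window w 0 (3 ^ k) := by
  refine List.ext_getElem (by simp [length_iterate_fw]) fun n hk _ => ?_
  have hn : n < (fw^[n + 1] [0]).length := by
    rw [length_iterate_fw, List.length_singleton, Nat.mul_one]
    exact n.lt_succ_self.trans (Nat.lt_pow_self (by norm_num))
  have hw : (window w 0 (3 ^ k))[n] = (fw^[n + 1] [0])[n] := by
    rw [← List.getD_eq_getElem _ 0 hn, ← w]
    simp [window]
  rw [hw, (iterate_fw_prefix (Nat.le_add_right k (n + 1))).getElem hk,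
    (iterate_fw_prefix (Nat.le_add_left (n + 1) k)).getElem hn]

lemma fw_window_zero (n : ℕ) : fw (window w 0 n) = window w 0 (3 * n) := by
  have hn : n < 3 ^ n := Nat.lt_pow_self (by norm_num)
  have himage : fw (window w 0 n) <+: window w 0 (3 ^ (n + 1)) := by
    rw [← iterate_fw_eq_window, Function.iterate_succ_apply', iterate_fw_eq_window]
    exact (take_window w 0 hn.le ▸ List.take_prefix n _).flatMap fm
  rw [List.prefix_iff_eq_take.1 himage, length_fw, length_window,
    take_window w 0 (by rw [pow_succ]; omega)]

lemma fw_window (m n : ℕ) : fw (window w m n) = window w (3 * m) (3 * n) := by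
  have h := fw_window_zero (m + n)
  rw [window_add, fw_append, fw_window_zero, Nat.mul_add, window_add] at h
  simpa using h

lemma iterate_fw_window (k m n : ℕ) :
    fw^[k] (window w m n) = window w (3 ^ k * m) (3 ^ k * n) := by
  induction k with
  | zero => simp
  | succ k ih => rw [Function.iterate_succ_apply', ih, fw_window, pow_succ']; simp only [mul_assoc]

lemma fm_w (m : ℕ) : fm (w m) = [w (3 * m), w (3 * m + 1), w (3 * m + 2)] := by
  have h := fw_window m 1
  rwa [window_one, fw, List.flatMap_singleton] at h

lemma w_eq_zero_of_mod_three_eq_zero {n : ℕ} (hn : n % 3 = 0) : w n = 0 := by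
  have hfm : ∀ a b c d, fm a = [b, c, d] → b = 0 := by decide
  obtain ⟨m, rfl⟩ := Nat.dvd_of_mod_eq_zero hn
  exact hfm _ _ _ _ (fm_w m)

lemma w_ne_zero_of_mod_three_eq_one {n : ℕ} (hn : n % 3 = 1) : w n ≠ 0 := by
  have hfm : ∀ a b c d, fm a = [b, c, d] → c ≠ 0 := by decide
  rw [← Nat.div_add_mod n 3, hn]
  exact hfm _ _ _ _ (fm_w (n / 3))

/-- The factors of length two of `w`. -/
def twoLetterFactors : List (List A4) :=
  [[0, 1], [1, 0], [0, 0], [1, 2], [2, 0], [0, 3], [3, 0], [3, 1]]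

lemma window_two_mem_twoLetterFactors (m : ℕ) : window w m 2 ∈ twoLetterFactors := by
  have hfm : ∀ a, ∀ r < 3, ((fm a ++ [0]).drop r).take 2 ∈ twoLetterFactors := by decide
  have hblock : fm (w (m / 3)) ++ [0] = window w (3 * (m / 3)) 4 := by
    rw [fm_w, ← w_eq_zero_of_mod_three_eq_zero (n := 3 * (m / 3) + 3) (by omega)]
    rfl
  have h := hfm (w (m / 3)) (m % 3) (Nat.mod_lt _ (by norm_num))
  rwa [hblock, take_drop_window _ (by omega), Nat.div_add_mod] at h

/-- Finite words that contain every factor of length `n` of `w`: such a factor starts inside an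
image `f^k(a)` with `n ≤ 3 ^ k` and hence lies in `f^k(ab)`, truncated beyond the last position it
can reach, for a factor `ab` of `w`. -/
def coveringWords (n : ℕ) : List (List A4) :=
  twoLetterFactors.map fun u => (fw^[Nat.clog 3 n] u).take (3 ^ Nat.clog 3 n + n)

lemma exists_window_infix_mem_coveringWords (i n : ℕ) :
    ∃ u ∈ coveringWords n, window w i n <:+: u := by
  set k := Nat.clog 3 n
  set m := i / 3 ^ k
  have hn : n ≤ 3 ^ k := Nat.le_pow_clog (by norm_num) n
  have hr : i % 3 ^ k < 3 ^ k := Nat.mod_lt _ (by positivity)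
  have hcover : (fw^[k] (window w m 2)).take (3 ^ k + n) = window w (3 ^ k * m) (3 ^ k + n) := by
    rw [iterate_fw_window, take_window _ _ (by omega)]
  refine ⟨_, List.mem_map_of_mem (window_two_mem_twoLetterFactors m), ?_⟩
  rw [hcover, ← Nat.div_add_mod i (3 ^ k)]
  exact window_infix w (by omega)

/-! ### Words in the kernel of `ψ` -/

lemma InKerPsi.sum_map_eq_zero {M : Type*} [AddCommMonoid M] {φ : A4 → M}
    (hφ : ∀ a, 4 • φ a = 0) {u : List A4} (hu : InKerPsi u) : (u.map φ).sum = 0 := by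
  rw [Finset.sum_list_map_count]
  refine Finset.sum_eq_zero fun a _ => ?_
  obtain ⟨c, hc⟩ := hu a
  rw [hc, mul_nsmul, hφ, nsmul_zero]

lemma InKerPsi.four_dvd_length {u : List A4} (hu : InKerPsi u) : 4 ∣ u.length := by
  rw [← List.sum_toFinset_count_eq_length]
  exact Finset.dvd_sum fun a _ => hu a

lemma count_fw (u : List A4) (b : A4) :
    (fw u).count b = ∑ a, u.count a * (fm a).count b := by
  rw [fw, List.count_flatMap, Finset.sum_list_map_count]
  refine Finset.sum_subset (Finset.subset_univ _) fun a _ ha => ?_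
  rw [List.count_eq_zero_of_not_mem (by simpa using ha), zero_smul]

-- The incidence matrix of `f` has determinant `3`, hence is invertible modulo `4`.
lemma InKerPsi.of_fw {u : List A4} (hu : InKerPsi (fw u)) : InKerPsi u := by
  have h0 : 4 ∣ u.count 0 * 2 + u.count 1 + u.count 2 * 2 + u.count 3 := by
    simpa [count_fw, Fin.sum_univ_four, fm] using hu 0
  have h1 : 4 ∣ u.count 0 + u.count 1 + u.count 3 := by
    simpa [count_fw, Fin.sum_univ_four, fm] using hu 1
  have h2 : 4 ∣ u.count 1 := by
    simpa [count_fw, Fin.sum_univ_four, fm] using hu 2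
  have h3 : 4 ∣ u.count 2 + u.count 3 := by
    simpa [count_fw, Fin.sum_univ_four, fm] using hu 3
  have hcount : 4 ∣ u.count 0 ∧ 4 ∣ u.count 1 ∧ 4 ∣ u.count 2 ∧ 4 ∣ u.count 3 := by omega
  simpa [InKerPsi, Fin.forall_fin_succ] using hcount

section ShiftedWindow

variable {x : ℕ → A4} {i q : ℕ}

lemma InKerPsi.window_succ_iff (h : x i = x (i + q)) :
    InKerPsi (window x (i + 1) q) ↔ InKerPsi (window x i q) := by
  have hperm : (window x (i + 1) q).Perm (window x i q) := by
    refine List.Perm.cons_inv (a := x i) ?_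
    rw [cons_window, h]
    exact List.perm_append_singleton _ _
  simp only [InKerPsi, hperm.count_eq]

lemma eq_of_inKerPsi_window (h : InKerPsi (window x i q)) (h' : InKerPsi (window x (i + 1) q)) :
    x i = x (i + q) := by
  by_contra hne
  have hcount := congrArg (List.count (x i)) (cons_window x i q)
  rw [List.count_cons_self, List.count_append,
    List.count_eq_zero_of_not_mem (l := [x (i + q)]) (by simpa using hne)] at hcount
  have hdvd := h (x i)
  have hdvd' := h' (x i)
  omega

end ShiftedWindow

/-- The `l + 1` consecutive windows of length `q` of `x` starting at `i, …, i + l` all lie in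
`ker ψ`. This encodes a factor of length `q + l` at position `i` with kernel period `q`: sliding
the window by one position preserves membership in `ker ψ` exactly when the letter lost equals the
letter gained. -/
def IsKernelRun (x : ℕ → A4) (q l i : ℕ) : Prop :=
  ∀ k ≤ l, InKerPsi (window x (i + k) q)

lemma exists_isKernelRun_of_kernelPeriod {x : ℕ → A4} {v : List A4} {q : ℕ} (hv : FactorOf v x)
    (hq : KernelPeriod v q) : ∃ i l, v.length = q + l ∧ IsKernelRun x q l i := by
  obtain ⟨i, hocc⟩ := hv
  obtain ⟨hqv, ⟨-, hper⟩, hker⟩ := hq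
  obtain ⟨l, hl⟩ := Nat.exists_eq_add_of_le hqv
  replace hocc : v = window x i (q + l) := hl ▸ hocc
  refine ⟨i, l, hl, fun k hk => ?_⟩
  induction k with
  | zero =>
    rwa [hocc, take_window _ _ (Nat.le_add_right q l)] at hker
  | succ k ih =>
    have hletter : x (i + k) = x (i + k + q) := by
      have h := hper k (by omega)
      simpa [hocc, window, show k < q + l by omega, show k + q < q + l by omega, add_assoc] using h
    exact (InKerPsi.window_succ_iff hletter).2 (ih (by omega))

namespace IsKernelRun

section

variable {x : ℕ → A4} {q l i : ℕ}

lemma mono {l' : ℕ} (h : IsKernelRun x q l i) (hl : l' ≤ l) : IsKernelRun x q l' i :=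
  fun k hk => h k (hk.trans hl)

lemma inKerPsi_window (h : IsKernelRun x q l i) {n : ℕ} (hin : i ≤ n) (hnl : n ≤ i + l) :
    InKerPsi (window x n q) := by
  obtain ⟨k, rfl⟩ := Nat.exists_eq_add_of_le hin
  exact h k (by omega)

lemma letter_eq (h : IsKernelRun x q l i) {n : ℕ} (hin : i ≤ n) (hnl : n < i + l) :
    x n = x (n + q) :=
  eq_of_inKerPsi_window (h.inKerPsi_window hin hnl.le) (h.inKerPsi_window (by omega) hnl)

lemma four_dvd_period (h : IsKernelRun x q l i) : 4 ∣ q := by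
  simpa using (h 0 l.zero_le).four_dvd_length

end

lemma three_dvd_period {q l i : ℕ} (h : IsKernelRun w q l i) (hl : 3 ≤ l) : 3 ∣ q := by
  have hne {m n : ℕ} (hm : m % 3 = 0) (hn : n % 3 = 1) : w m ≠ w n := by
    rw [w_eq_zero_of_mod_three_eq_zero hm]
    exact (w_ne_zero_of_mod_three_eq_one hn).symm
  by_contra hq
  obtain hq | hq : q % 3 = 1 ∨ q % 3 = 2 := by omega
  · obtain ⟨n, hin, hnl, hn⟩ : ∃ n, i ≤ n ∧ n < i + 3 ∧ n % 3 = 0 :=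
      ⟨(i + 2) / 3 * 3, by omega, by omega, by omega⟩
    exact hne hn (by omega) (h.letter_eq hin (by omega))
  · obtain ⟨n, hin, hnl, hn⟩ : ∃ n, i ≤ n ∧ n < i + 3 ∧ n % 3 = 1 :=
      ⟨(i + 1) / 3 * 3 + 1, by omega, by omega, by omega⟩
    exact hne (by omega) hn (h.letter_eq hin (by omega)).symm

-- Every block of `f` begins with the same letter, so for periods divisible by `3` the window at
-- `3 * j` lies in `ker ψ` if and only if the one at `3 * j + 1` does.
lemma desubstitute {p l i : ℕ} (h : IsKernelRun w (3 * p) l i) (hl : 1 ≤ l) :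
    IsKernelRun w p ((l - 1) / 3) ((i + 1) / 3) := by
  intro k hk
  set j := (i + 1) / 3 + k
  refine InKerPsi.of_fw ?_
  rw [fw_window]
  obtain hi | hi : i ≤ 3 * j ∨ i = 3 * j + 1 := by omega
  · exact h.inKerPsi_window hi (by omega)
  · have hletter : w (3 * j) = w (3 * j + 3 * p) := by
      rw [w_eq_zero_of_mod_three_eq_zero (by omega), w_eq_zero_of_mod_three_eq_zero (by omega)]
    exact (InKerPsi.window_succ_iff hletter).1 (hi ▸ h 0 l.zero_le)

end IsKernelRun

/-! ### Search for kernel runs in finite words -/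

/-- Letter weights recording the numbers of occurrences modulo `4` of the letters `2`, `3`, `4`.
Those of `1` are determined by them for words of length divisible by `4`. -/
def letterWeight : A4 → ZMod 4 × ZMod 4 × ZMod 4
  | 0 => (0, 0, 0)
  | 1 => (1, 0, 0)
  | 2 => (0, 1, 0)
  | 3 => (0, 0, 1)

/-- Entry `r` tells whether the length-`q` factor of `u` at position `r` has weight zero. It
compares prefix weights, so that all factors are tested in one pass over `u`. -/
def zeroWeightFlags (q : ℕ) (u : List A4) : List Bool :=
  let prefixWeights := u.scanl (fun s a => s + letterWeight a) 0
  List.zipWith (fun s t => decide (s = t)) prefixWeights (prefixWeights.drop q)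

lemma InKerPsi.zeroWeightFlags_getElem? {u : List A4} {q r : ℕ}
    (h : InKerPsi ((u.drop r).take q)) (hr : r + q ≤ u.length) :
    (zeroWeightFlags q u)[r]? = some true := by
  have hfoldl (v : List A4) :
      v.foldl (fun s a => s + letterWeight a) 0 = (v.map letterWeight).sum := by
    rw [List.sum_eq_foldl, List.foldl_map]
  have hweight : ((u.take (r + q)).map letterWeight).sum = ((u.take r).map letterWeight).sum := by
    rw [List.take_add, List.map_append, List.sum_append, h.sum_map_eq_zero (by decide), add_zero]
  simp [zeroWeightFlags, List.getElem?_zipWith, List.getElem?_drop, hfoldl, add_comm q r, hr,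
    show r ≤ u.length by omega, -List.map_take, hweight]

lemma replicate_true_infix_zeroWeightFlags {u : List A4} {q l r : ℕ}
    (h : ∀ k ≤ l, InKerPsi ((u.drop (r + k)).take q)) (hr : r + l + q ≤ u.length) :
    List.replicate (l + 1) true <:+: zeroWeightFlags q u := by
  have heq : ((zeroWeightFlags q u).drop r).take (l + 1) = List.replicate (l + 1) true := by
    refine List.ext_getElem? fun k => ?_
    rw [List.getElem?_take, List.getElem?_drop, List.getElem?_replicate]
    split_ifs with hk
    · exact (h k (by omega)).zeroWeightFlags_getElem? (by omega)
    · rfl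
  exact heq ▸ (List.take_prefix _ _).isInfix.trans (List.drop_suffix _ _).isInfix

lemma IsKernelRun.replicate_true_infix {x : ℕ → A4} {q l i : ℕ} (h : IsKernelRun x q l i)
    {u : List A4} (hu : window x i (q + l) <:+: u) :
    List.replicate (l + 1) true <:+: zeroWeightFlags q u := by
  obtain ⟨s, t, rfl⟩ := hu
  refine replicate_true_infix_zeroWeightFlags (r := s.length) (fun k hk => ?_) (by simp; omega)
  rw [List.append_assoc, ← List.drop_drop, List.drop_left,
    List.drop_append_of_le_length (by simp; omega), List.take_append_of_le_length (by simp; omega),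
    take_drop_window _ (by omega)]
  exact h k hk

/-! ### Excesses of kernel runs in `w` -/

/-- The periods of the kernel runs of `w` whose excess `l` violates `31 * (2 * l + 3) ≤ 2 * q`. -/
def exceptionalPeriods : List ℕ := [40, 44, 68, 104]

/-- A strict upper bound for the excesses `l` of kernel runs of period `q` in `w`. Outside
`exceptionalPeriods`, `l < excessBound q` means `31 * (2 * l + 3) ≤ 2 * q`, a condition that is
inherited under `q ↦ 3 * q`, `l ↦ 3 * l + 3`; by truncated subtraction the bound is `0`, so that
there is no run at all, for small `q`. -/
def excessBound (q : ℕ) : ℕ :=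
  (2 * q - 31) / 62 + if q ∈ exceptionalPeriods then 1 else 0

/-- The periods at which `excessBound` is verified by direct search: those too small for
desubstitution, and the triples of the exceptional ones. -/
def searchedPeriods : List ℕ :=
  [4, 8, 12, 16, 20, 24, 28, 32, 36, 40, 44, 48, 52, 56, 60, 64, 68, 72, 76, 80, 84, 88, 92, 96,
    100, 108, 120, 132, 204, 312]

set_option maxRecDepth 100000 in
lemma not_replicate_true_infix_of_mem_searchedPeriods :
    ∀ q ∈ searchedPeriods, ∀ u ∈ coveringWords (q + excessBound q),
      ¬ List.replicate (excessBound q + 1) true <:+: zeroWeightFlags q u := by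
  decide +kernel

lemma three_le_excessBound {q : ℕ} (hpos : 1 ≤ q) (hfour : 4 ∣ q) (hq : q ∉ searchedPeriods) :
    3 ≤ excessBound q := by
  simp only [searchedPeriods, List.mem_cons, List.not_mem_nil, or_false, not_or] at hq
  simp only [excessBound, exceptionalPeriods, List.mem_cons, List.not_mem_nil, or_false]
  split_ifs <;> omega

lemma lt_excessBound_three_mul {p l : ℕ} (hp : p ∉ exceptionalPeriods)
    (h : (l - 1) / 3 < excessBound p) : l < excessBound (3 * p) := by
  rw [excessBound, if_neg hp] at h
  rw [excessBound]
  omega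

lemma excessBound_le (q : ℕ) : excessBound q ≤ (q - 4) / 31 := by
  simp only [excessBound, exceptionalPeriods, List.mem_cons, List.not_mem_nil, or_false]
  split_ifs <;> omega

namespace IsKernelRun

lemma lt_excessBound_of_mem_searchedPeriods {q l i : ℕ} (h : IsKernelRun w q l i)
    (hq : q ∈ searchedPeriods) : l < excessBound q := by
  by_contra! hl
  obtain ⟨u, hu, hinfix⟩ := exists_window_infix_mem_coveringWords i (q + excessBound q)
  exact not_replicate_true_infix_of_mem_searchedPeriods q hq u hu
    ((h.mono hl).replicate_true_infix hinfix)

theorem lt_excessBound {q l i : ℕ} (h : IsKernelRun w q l i) (hpos : 1 ≤ q) :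
    l < excessBound q := by
  induction q using Nat.strong_induction_on generalizing l i with
  | _ q ih =>
  by_cases hq : q ∈ searchedPeriods
  · exact h.lt_excessBound_of_mem_searchedPeriods hq
  obtain hl | hl := Nat.lt_or_ge l 3
  · exact hl.trans_le (three_le_excessBound hpos h.four_dvd_period hq)
  · obtain ⟨p, rfl⟩ := h.three_dvd_period hl
    have hexc : ∀ p ∈ exceptionalPeriods, 3 * p ∈ searchedPeriods := by decide
    have hp : (l - 1) / 3 < excessBound p :=
      ih p (by omega) (h.desubstitute (by omega)) (by omega)
    exact lt_excessBound_three_mul (mt (hexc p) hq) hp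

end IsKernelRun

theorem stmt4_general (q : ℕ) :
    ¬ ∃ v : List A4, FactorOf v w ∧ KernelPeriod v q ∧
      (31 : ℤ) * (v.length + 1) ≥ 32 * (q : ℤ) - 3 := by
  rintro ⟨v, hv, hper, hlen⟩
  obtain ⟨i, l, hvl, hrun⟩ := exists_isKernelRun_of_kernelPeriod hv hper
  have hbound := hrun.lt_excessBound hper.2.1.1
  have hl : l < (q - 4) / 31 := hbound.trans_le (excessBound_le q)
  omega

/-- Remark R1 (for `n = 32`): for every `q ≤ 1966`, `w` contains no factor `v` having kernel
period `q` such that `31(|v|+1) ≥ 32q - 3`. -/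
theorem stmt4 (q : ℕ) (hq : q ≤ 1966) :
    ¬ ∃ v : List A4, FactorOf v w ∧ KernelPeriod v q ∧
      (31 : ℤ) * (v.length + 1) ≥ 32 * (q : ℤ) - 3 :=
  stmt4_general q
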